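/- arXiv:1612.00806 — 2 statements merged into one kernel-verified Lean document; each statement's English description precedes it below -/
import Mathlib

section
/- Let f : ℂ → ℝ be a three times continuously differentiable function with compact support, let n ≥ 1, and let λ ∈ ℂ with 𝛌 = (λ, …, λ) ∈ ℂ^{n+1} the diagonal point. Then for all indices 2 ≤ r < s ≤ n+1: (∂_s ∂̄_r Υ_0^{n+1}[f])(𝛌) = ∂f(λ) · ∂̄f(λ) · f(λ)^{n−1} · Σ_{k ⊢ n+1} Υ_0(k) · k_r k_s · 1_{s ≤ ℓ(k)}; and for all 2 ≤ r ≤ n+1: (∂_r ∂̄_r Υ_0^{n+1}[f])(𝛌) = ∂f(λ) · ∂̄f(λ) · f(λ)^{n−1} · Σ_{k ⊢ n+1} Υ_0(k) · k_r(k_r − 1) · 1_{r ≤ ℓ(k)} + Δf(λ) · f(λ)^n · Σ_{k ⊢ n+1} Υ_0(k) · k_r · 1_{r ≤ ℓ(k)}. Here k_r denotes the r-th part of the composition k (only defined when r ≤ ℓ(k)). -/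
open Complex Finset

noncomputable section

/-- The multinomial coefficient `M(k)` of a composition, as a complex number. -/
def compM {m : ℕ} (c : Composition m) : ℂ :=
  (Nat.factorial m : ℂ) / ∏ j : Fin c.length, (Nat.factorial (c.blocksFun j) : ℂ)

/-- `Υ₀(k) = (-1)^{ℓ(k)} M(k)/ℓ(k)`. -/
def Upsilon0 {m : ℕ} (c : Composition m) : ℂ :=
  ((-1 : ℂ) ^ c.length / (c.length : ℂ)) * compM c

/-- `Υ₀^m[f](z₁, …, z_m) = Σ_{k ⊢ m} Υ₀(k) Π_{j=1}^{ℓ(k)} f(z_j)^{k_j}`. -/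
def Upsilon0Fun {m : ℕ} (f : ℂ → ℝ) (z : Fin m → ℂ) : ℂ :=
  ∑ c : Composition m,
    Upsilon0 c * ∏ j : Fin c.length,
      ((f (z (Fin.castLE c.length_le j)) : ℂ)) ^ (c.blocksFun j)

/-- The `r`-th part (1-based) of a composition, as a complex number
(`0` if out of range; only used for `r ≤ ℓ(k)` below). -/
def compPart {m : ℕ} (c : Composition m) (r : ℕ) : ℂ :=
  (c.blocks.getD (r - 1) 0 : ℂ)

/-- Wirtinger derivative `∂_j = (∂_{x_j} − i ∂_{y_j})/2` in the `j`-th coordinate of `ℂᵐ`. -/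
def wD {m : ℕ} (j : Fin m) (F : (Fin m → ℂ) → ℂ) (w : Fin m → ℂ) : ℂ :=
  (fderiv ℝ F w (Pi.single j 1) - Complex.I * fderiv ℝ F w (Pi.single j Complex.I)) / 2

/-- Wirtinger derivative `∂̄_j = (∂_{x_j} + i ∂_{y_j})/2` in the `j`-th coordinate of `ℂᵐ`. -/
def wDbar {m : ℕ} (j : Fin m) (F : (Fin m → ℂ) → ℂ) (w : Fin m → ℂ) : ℂ :=
  (fderiv ℝ F w (Pi.single j 1) + Complex.I * fderiv ℝ F w (Pi.single j Complex.I)) / 2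

/-- One-variable Wirtinger derivative `∂ = (∂_x − i ∂_y)/2`. -/
def wD1 (g : ℂ → ℂ) (z : ℂ) : ℂ :=
  (fderiv ℝ g z 1 - Complex.I * fderiv ℝ g z Complex.I) / 2

/-- One-variable Wirtinger derivative `∂̄ = (∂_x + i ∂_y)/2`. -/
def wDbar1 (g : ℂ → ℂ) (z : ℂ) : ℂ :=
  (fderiv ℝ g z 1 + Complex.I * fderiv ℝ g z Complex.I) / 2

/-!
`Υ₀^m[f](z)` is the value at `(f(z₁), …, f(z_m))` of the polynomial `P = Σ_{k ⊢ m} Υ₀(k) X^k`, which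
is homogeneous of degree `m`. The chain rule for polynomials therefore expresses `∂_s ∂̄_r` through
`∂P/∂X_r` and `∂²P/∂X_s∂X_r`. These are homogeneous of degrees `m - 1` and `m - 2`, so at a diagonal
point each is a power of `f(λ)` times its value at `(1, …, 1)`, which is the sum over compositions.
-/

section MvPolynomial

open MvPolynomial

variable {σ : Type*}

theorem hasFDerivAt_mvPolynomial_eval {𝕜 A E : Type*} [NontriviallyNormedField 𝕜] [NormedCommRing A]
    [NormedAlgebra 𝕜 A] [NormedAddCommGroup E] [NormedSpace 𝕜 E] [Fintype σ]
    {u : σ → E → A} {u' : σ → E →L[𝕜] A} {x : E} (hu : ∀ i, HasFDerivAt (u i) (u' i) x)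
    (P : MvPolynomial σ A) :
    HasFDerivAt (fun y => eval (fun i => u i y) P)
      (∑ i, eval (fun j => u j x) (pderiv i P) • u' i) x := by
  classical
  induction P using MvPolynomial.induction_on with
  | C a =>
    simp only [eval_C]
    exact (hasFDerivAt_const a x).congr_fderiv (by ext v; simp)
  | add P Q hP hQ =>
    simp only [eval_add]
    exact (hP.fun_add hQ).congr_fderiv (by ext v; simp [add_mul, sum_add_distrib])
  | mul_X P i hP =>
    simp only [eval_mul, eval_X]
    exact (hP.fun_mul (hu i)).congr_fderiv <| by
      ext v
      simp [Pi.single_apply, apply_ite, add_mul, mul_assoc, sum_add_distrib, mul_sum]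

theorem eval_const_of_isHomogeneous {R : Type*} [CommSemiring R] {P : MvPolynomial σ R} {d : ℕ}
    (hP : P.IsHomogeneous d) (x : R) : eval (fun _ => x) P = x ^ d * eval 1 P := by
  simp only [eval_eq, mul_sum]
  refine sum_congr rfl fun e he => ?_
  have he_degree : ∑ i ∈ e.support, e i = d := (hP.degree_eq_sum_deg_support he).symm
  simp only [prod_pow_eq_pow_sum, he_degree, Pi.one_apply, one_pow, prod_const_one, mul_one,
    mul_comm]

theorem eval_one_pderiv_monomial {R : Type*} [CommSemiring R] (i : σ) (e : σ →₀ ℕ) (a : R) :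
    eval 1 (pderiv i (monomial e a)) = a * e i := by
  simp [pderiv_monomial, eval_monomial]

theorem eval_one_pderiv_pderiv_monomial {R : Type*} [CommRing R] [DecidableEq σ] (i j : σ)
    (e : σ →₀ ℕ) (a : R) :
    eval 1 (pderiv j (pderiv i (monomial e a))) =
      a * (e i * (e j - if j = i then 1 else 0)) := by
  rw [pderiv_monomial, eval_one_pderiv_monomial, mul_assoc]
  congr 1
  obtain rfl | hji := eq_or_ne j i
  · cases h : e j <;> simp [h]
  · simp [hji]

end MvPolynomial

section Wirtinger

open MvPolynomial (eval pderiv)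

variable {m : ℕ} {g : ℂ → ℂ} {w : Fin m → ℂ}

theorem fderiv_eval_comp_single (hg : ∀ i, DifferentiableAt ℝ g (w i))
    (P : MvPolynomial (Fin m) ℂ) (r : Fin m) (v : ℂ) :
    fderiv ℝ (fun z : Fin m → ℂ => eval (fun i => g (z i)) P) w (Pi.single r v) =
      eval (fun i => g (w i)) (pderiv r P) * fderiv ℝ g (w r) v := by
  have hcoord : ∀ i, HasFDerivAt (fun z : Fin m → ℂ => g (z i))
      ((fderiv ℝ g (w i)).comp (ContinuousLinearMap.proj i)) w := fun i =>
    (hg i).hasFDerivAt.comp w (hasFDerivAt_apply i w)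
  rw [(hasFDerivAt_mvPolynomial_eval hcoord P).fderiv, _root_.sum_apply,
    sum_eq_single_of_mem r (mem_univ r)]
  · simp
  · intro i _ hir
    simp [Pi.single_eq_of_ne hir]

theorem wD_eval_comp (hg : ∀ i, DifferentiableAt ℝ g (w i)) (P : MvPolynomial (Fin m) ℂ)
    (r : Fin m) :
    wD r (fun z => eval (fun i => g (z i)) P) w =
      eval (fun i => g (w i)) (pderiv r P) * wD1 g (w r) := by
  simp only [wD, wD1, fderiv_eval_comp_single hg]
  ring

theorem wDbar_eval_comp (hg : ∀ i, DifferentiableAt ℝ g (w i)) (P : MvPolynomial (Fin m) ℂ)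
    (r : Fin m) :
    wDbar r (fun z => eval (fun i => g (z i)) P) w =
      eval (fun i => g (w i)) (pderiv r P) * wDbar1 g (w r) := by
  simp only [wDbar, wDbar1, fderiv_eval_comp_single hg]
  ring

theorem wD_mul {F G : (Fin m → ℂ) → ℂ} (hF : DifferentiableAt ℝ F w)
    (hG : DifferentiableAt ℝ G w) (s : Fin m) :
    wD s (fun z => F z * G z) w = wD s F w * G w + F w * wD s G w := by
  simp only [wD, fderiv_fun_mul hF hG, _root_.add_apply, _root_.smul_apply, smul_eq_mul]
  ring

theorem wD_comp_apply {h : ℂ → ℂ} {r : Fin m} (hh : DifferentiableAt ℝ h (w r)) (s : Fin m) :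
    wD s (fun z => h (z r)) w = if s = r then wD1 h (w r) else 0 := by
  have hcoord : HasFDerivAt (fun z : Fin m → ℂ => h (z r))
      ((fderiv ℝ h (w r)).comp (ContinuousLinearMap.proj r)) w :=
    hh.hasFDerivAt.comp w (hasFDerivAt_apply r w)
  simp only [wD, hcoord.fderiv, ContinuousLinearMap.comp_apply, ContinuousLinearMap.proj_apply]
  obtain rfl | hsr := eq_or_ne s r
  · simp [wD1]
  · simp [hsr]

theorem wD_wDbar_eval_comp (hg : Differentiable ℝ g) {r : Fin m}
    (hg' : DifferentiableAt ℝ (wDbar1 g) (w r)) (P : MvPolynomial (Fin m) ℂ) (s : Fin m) :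
    wD s (wDbar r fun z => eval (fun i => g (z i)) P) w =
      wD1 g (w s) * wDbar1 g (w r) * eval (fun i => g (w i)) (pderiv s (pderiv r P)) +
        if s = r then wD1 (wDbar1 g) (w r) * eval (fun i => g (w i)) (pderiv r P) else 0 := by
  have hcoord : ∀ i, DifferentiableAt ℝ (fun z : Fin m → ℂ => g (z i)) w := fun i =>
    (hg (w i)).comp w (differentiableAt_apply i w)
  have hpoly := (hasFDerivAt_mvPolynomial_eval (fun i => (hcoord i).hasFDerivAt)
    (pderiv r P)).differentiableAt
  have hbar : DifferentiableAt ℝ (fun z : Fin m → ℂ => wDbar1 g (z r)) w :=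
    hg'.fun_comp' w (differentiableAt_apply r w)
  have hfirst : (wDbar r fun z => eval (fun i => g (z i)) P) =
      fun z => eval (fun i => g (z i)) (pderiv r P) * wDbar1 g (z r) :=
    funext fun z => wDbar_eval_comp (fun i => hg (z i)) P r
  rw [hfirst, wD_mul hpoly hbar, wD_eval_comp (fun i => hg (w i)), wD_comp_apply hg']
  split_ifs <;> ring

theorem differentiable_wDbar1 (hg : ContDiff ℝ 2 g) : Differentiable ℝ (wDbar1 g) := by
  have hfderiv (v : ℂ) : Differentiable ℝ fun z => fderiv ℝ g z v :=
    ((hg.fderiv_right (m := 1) (by norm_num)).differentiable one_ne_zero).clm_apply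
      (differentiable_const v)
  simpa only [wDbar1, div_eq_mul_inv] using!
    ((hfderiv 1).fun_add ((hfderiv I).const_mul I)).mul_const 2⁻¹

end Wirtinger

section Upsilon

open MvPolynomial (eval pderiv monomial)

variable {m : ℕ}

/-- The composition `k` as an exponent vector `(k₁, …, k_ℓ, 0, …, 0)`, so that `X^k` is the monomial
`∏_j X_j ^ k_j` in as many variables as the integer being composed. -/
def compExponent (c : Composition m) : Fin m →₀ ℕ :=
  ∑ j : Fin c.length, Finsupp.single (Fin.castLE c.length_le j) (c.blocksFun j)

theorem degree_compExponent (c : Composition m) : (compExponent c).degree = m := by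
  simp [compExponent, map_sum, Finsupp.degree_single, c.sum_blocksFun]

theorem compExponent_apply (c : Composition m) (i : Fin m) :
    compExponent c i = c.blocks.getD i 0 := by
  simp only [compExponent, Finsupp.finsetSum_apply, Finsupp.single_apply]
  by_cases hi : (i : ℕ) < c.length
  · rw [sum_eq_single_of_mem ⟨i, hi⟩ (mem_univ _)]
    · simp [Composition.blocksFun, hi]
    · intro j _ hj
      exact if_neg fun h => hj (Fin.castLE_injective c.length_le h)
  · rw [List.getD_eq_default _ _ (not_lt.mp hi)]
    refine sum_eq_zero fun j _ => if_neg fun h => hi ?_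
    exact h ▸ j.isLt

theorem compExponent_pred_eq_compPart (c : Composition m) {r : ℕ} (hr : r - 1 < m) :
    (compExponent c ⟨r - 1, hr⟩ : ℂ) = compPart c r := by
  rw [compExponent_apply, compPart]

theorem compPart_eq_zero_of_length_lt {c : Composition m} {r : ℕ} (hr : c.length < r) :
    compPart c r = 0 := by
  rw [compPart, List.getD_eq_default _ _ (Nat.le_sub_one_of_lt hr), Nat.cast_zero]

/-- The generating polynomial `Σ_{k ⊢ m} Υ₀(k) X^k`, whose value at `(f(z₁), …, f(z_m))` is
`Υ₀^m[f](z₁, …, z_m)`. -/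
def upsilon0Poly (m : ℕ) : MvPolynomial (Fin m) ℂ :=
  ∑ c : Composition m, monomial (compExponent c) (Upsilon0 c)

theorem Upsilon0Fun_eq_eval (f : ℂ → ℝ) (z : Fin m → ℂ) :
    Upsilon0Fun f z = eval (fun i => (f (z i) : ℂ)) (upsilon0Poly m) := by
  simp only [Upsilon0Fun, upsilon0Poly, compExponent, map_sum, MvPolynomial.monomial_sum_index,
    map_mul, map_prod, MvPolynomial.eval_C, MvPolynomial.eval_monomial, one_mul, pow_zero,
    Finsupp.prod_single_index]

theorem isHomogeneous_upsilon0Poly (m : ℕ) : (upsilon0Poly m).IsHomogeneous m :=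
  MvPolynomial.IsHomogeneous.sum _ _ _ fun c _ =>
    MvPolynomial.isHomogeneous_monomial _ (degree_compExponent c)

theorem eval_const_pderiv_upsilon0Poly (i : Fin m) (x : ℂ) :
    eval (fun _ => x) (pderiv i (upsilon0Poly m)) =
      x ^ (m - 1) * ∑ c : Composition m, Upsilon0 c * compExponent c i := by
  rw [eval_const_of_isHomogeneous (isHomogeneous_upsilon0Poly m).pderiv]
  simp only [upsilon0Poly, map_sum, eval_one_pderiv_monomial]

theorem eval_const_pderiv_pderiv_upsilon0Poly (i j : Fin m) (x : ℂ) :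
    eval (fun _ => x) (pderiv j (pderiv i (upsilon0Poly m))) =
      x ^ (m - 1 - 1) * ∑ c : Composition m,
        Upsilon0 c * (compExponent c i * (compExponent c j - if j = i then 1 else 0)) := by
  rw [eval_const_of_isHomogeneous (isHomogeneous_upsilon0Poly m).pderiv.pderiv]
  simp only [upsilon0Poly, map_sum, eval_one_pderiv_pderiv_monomial]

theorem wD_wDbar_Upsilon0Fun_diagonal {f : ℂ → ℝ} (hf : ContDiff ℝ 2 f) (r s : Fin m) (lam : ℂ) :
    wD s (wDbar r (Upsilon0Fun f)) (fun _ => lam) =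
      wD1 (fun w => (f w : ℂ)) lam * wDbar1 (fun w => (f w : ℂ)) lam * (f lam : ℂ) ^ (m - 1 - 1) *
          (∑ c : Composition m,
            Upsilon0 c * (compExponent c r * (compExponent c s - if s = r then 1 else 0))) +
        if s = r then
          wD1 (wDbar1 fun w => (f w : ℂ)) lam * (f lam : ℂ) ^ (m - 1) *
            ∑ c : Composition m, Upsilon0 c * compExponent c r
        else 0 := by
  have hg : ContDiff ℝ 2 fun w => (f w : ℂ) := ofRealCLM.contDiff.comp hf
  rw [funext (Upsilon0Fun_eq_eval f), wD_wDbar_eval_comp (hg.differentiable two_ne_zero)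
    (differentiable_wDbar1 hg lam), eval_const_pderiv_upsilon0Poly,
    eval_const_pderiv_pderiv_upsilon0Poly, mul_assoc _ (_ ^ _), mul_assoc _ (_ ^ _)]

end Upsilon

theorem upsilon_diagonal_derivatives_general
    (f : ℂ → ℝ) (hf : ContDiff ℝ 2 f) (n : ℕ) (lam : ℂ) :
    (∀ (r s : ℕ) (hr : 1 ≤ r) (hs : 1 ≤ s) (hrn : r ≤ n + 1) (hsn : s ≤ n + 1), r ≠ s →
      wD (⟨s - 1, by omega⟩ : Fin (n + 1))
          (wDbar (⟨r - 1, by omega⟩ : Fin (n + 1)) (Upsilon0Fun f))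
          (fun _ => lam)
        = wD1 (fun w => (f w : ℂ)) lam * wDbar1 (fun w => (f w : ℂ)) lam *
            (f lam : ℂ) ^ (n - 1) *
            ∑ c : Composition (n + 1), Upsilon0 c *
              (if max r s ≤ c.length then compPart c r * compPart c s else 0)) ∧
    (∀ (r : ℕ) (hr : 1 ≤ r) (hrn : r ≤ n + 1),
      wD (⟨r - 1, by omega⟩ : Fin (n + 1))
          (wDbar (⟨r - 1, by omega⟩ : Fin (n + 1)) (Upsilon0Fun f))
          (fun _ => lam)
        = wD1 (fun w => (f w : ℂ)) lam * wDbar1 (fun w => (f w : ℂ)) lam *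
            (f lam : ℂ) ^ (n - 1) *
            (∑ c : Composition (n + 1), Upsilon0 c *
              (if r ≤ c.length then compPart c r * (compPart c r - 1) else 0))
          + wD1 (wDbar1 (fun w => (f w : ℂ))) lam * (f lam : ℂ) ^ n *
            ∑ c : Composition (n + 1), Upsilon0 c *
              (if r ≤ c.length then compPart c r else 0)) := by
  constructor
  · intro r s hr hs hrn hsn hrs
    have hindex : (⟨s - 1, by omega⟩ : Fin (n + 1)) ≠ ⟨r - 1, by omega⟩ := by
      rw [ne_eq, Fin.mk.injEq]
      omega
    have hparts (c : Composition (n + 1)) :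
        (if max r s ≤ c.length then compPart c r * compPart c s else 0) =
          compPart c r * compPart c s := by
      refine ite_eq_left_iff.mpr fun h => ?_
      obtain h | h := lt_max_iff.mp (not_le.mp h) <;> simp [compPart_eq_zero_of_length_lt h]
    simp only [wD_wDbar_Upsilon0Fun_diagonal hf, if_neg hindex, hparts,
      compExponent_pred_eq_compPart, sub_zero, add_zero, Nat.add_sub_cancel]
  · intro r hr hrn
    have hpart (c : Composition (n + 1)) (a : ℂ) :
        (if r ≤ c.length then compPart c r * a else 0) = compPart c r * a :=
      ite_eq_left_iff.mpr fun h => by rw [compPart_eq_zero_of_length_lt (not_le.mp h), zero_mul]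
    have hpart_one (c : Composition (n + 1)) :
        (if r ≤ c.length then compPart c r else 0) = compPart c r := by
      simpa only [mul_one] using hpart c 1
    simp only [wD_wDbar_Upsilon0Fun_diagonal hf, if_true, hpart, hpart_one,
      compExponent_pred_eq_compPart, Nat.add_sub_cancel]

/-- mixed Wirtinger derivatives of `Υ₀^{n+1}[f]` at a diagonal point
`(λ, …, λ)` (coordinates indexed `1, …, n+1`; coordinate `r` is the `(r−1)`-th in
0-based indexing). -/
theorem upsilon_diagonal_derivatives
    (f : ℂ → ℝ) (hf : ContDiff ℝ 3 f) (hsupp : HasCompactSupport f)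
    (n : ℕ) (hn : 1 ≤ n) (lam : ℂ) :
    (∀ (r s : ℕ) (hr : 2 ≤ r) (hrs : r < s) (hs : s ≤ n + 1),
      wD (⟨s - 1, by omega⟩ : Fin (n + 1))
          (wDbar (⟨r - 1, by omega⟩ : Fin (n + 1)) (Upsilon0Fun f))
          (fun _ => lam)
        = wD1 (fun w => (f w : ℂ)) lam * wDbar1 (fun w => (f w : ℂ)) lam *
            (f lam : ℂ) ^ (n - 1) *
            ∑ c : Composition (n + 1), Upsilon0 c *
              (if s ≤ c.length then compPart c r * compPart c s else 0)) ∧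
    (∀ (r : ℕ) (hr : 2 ≤ r) (hr2 : r ≤ n + 1),
      wD (⟨r - 1, by omega⟩ : Fin (n + 1))
          (wDbar (⟨r - 1, by omega⟩ : Fin (n + 1)) (Upsilon0Fun f))
          (fun _ => lam)
        = wD1 (fun w => (f w : ℂ)) lam * wDbar1 (fun w => (f w : ℂ)) lam *
            (f lam : ℂ) ^ (n - 1) *
            (∑ c : Composition (n + 1), Upsilon0 c *
              (if r ≤ c.length then compPart c r * (compPart c r - 1) else 0))
          + wD1 (wDbar1 (fun w => (f w : ℂ))) lam * (f lam : ℂ) ^ n *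
            ∑ c : Composition (n + 1), Upsilon0 c *
              (if r ≤ c.length then compPart c r else 0)) := by
  obtain ⟨hne, hself⟩ := upsilon_diagonal_derivatives_general f (hf.of_le (by norm_num)) n lam
  refine ⟨fun r s hr hrs hs => ?_, fun r hr => hself r (by omega)⟩
  simpa only [max_eq_right hrs.le] using hne r s (by omega) (by omega) (by omega) hs hrs.ne
end
end

section
/- Let f : ℂ → ℝ be a three times continuously differentiable function with compact support and let n ≥ 1. Then Σ_{2 ≤ r ≤ s ≤ n+1} ∫_ℂ (∂_s ∂̄_r Υ_0^{n+1}[f])(λ, …, λ) dA(λ) = −𝒴_{n+1} · ∫_ℂ ∂f(λ) · ∂̄f(λ) · f(λ)^{n−1} dA(λ), where the integrand on the left is the mixed Wirtinger derivative of Υ_0^{n+1}[f] evaluated at the diagonal point (λ, …, λ) ∈ ℂ^{n+1}. In particular, by the values of 𝒴_{n+1}, the left-hand side equals −∫_ℂ ∂f ∂̄f dA when n = 1 and equals 0 for all n ≥ 2. -/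
open Complex Finset MeasureTheory

noncomputable section

/-- The measure `dA` on `ℂ`: `(1/π)` times Lebesgue measure. -/
def dA : Measure ℂ := (ENNReal.ofReal Real.pi)⁻¹ • (volume : Measure ℂ)

/-- `𝒴_m = −Σ_{k ⊢ m} Υ₀(k) [ Σ_{2 ≤ r < s ≤ ℓ(k)} k_r k_s + Σ_{r=2}^{ℓ(k)} k_r (k_r − m) ]`. -/
def Yval (m : ℕ) : ℂ :=
  -∑ c : Composition m, Upsilon0 c *
      ((∑ r ∈ Icc 2 c.length, ∑ s ∈ Icc (r + 1) c.length,
          compPart c r * compPart c s) +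
        ∑ r ∈ Icc 2 c.length, compPart c r * (compPart c r - (m : ℂ)))

/-! Every mixed derivative of a monomial `∏ⱼ g(zⱼ) ^ aⱼ` in two distinct coordinates `ρ ≠ σ` equals
`a_ρ a_σ ∂g ∂̄g g ^ (|a| - 2)` on the diagonal. The pure derivatives `∂_ρ ∂̄_ρ` need no computation:
by the chain rule `∑_σ ∂_σ` restricted to the diagonal is the derivative of `x ↦ G (x, …, x)`, whose
integral vanishes, so the case `ρ = σ` is minus the sum of the others, with coefficient
`a_ρ (a_ρ - |a|)`. Summing over compositions, whose parts are the exponents, gives `-𝒴`. -/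

section ComplexLineDeriv

variable {E : Type*} [NormedAddCommGroup E] [NormedSpace ℝ E]

/-- The derivative of `F` along the complexified tangent vector `X.1 + i X.2`. The Wirtinger
derivatives `∂` and `∂̄` are the cases `X = (1, -i) / 2` and `X = (1, i) / 2`, the factor `i` here
being formal and unrelated to a complex structure on `E`. -/
def complexLineDeriv (X : E × E) (F : E → ℂ) (x : E) : ℂ :=
  fderiv ℝ F x X.1 + I * fderiv ℝ F x X.2

variable {X : E × E} {F G : E → ℂ} {x : E}

lemma complexLineDeriv_mul (hF : DifferentiableAt ℝ F x) (hG : DifferentiableAt ℝ G x) :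
    complexLineDeriv X (fun y => F y * G y) x
      = complexLineDeriv X F x * G x + F x * complexLineDeriv X G x := by
  simp only [complexLineDeriv, fderiv_fun_mul hF hG, add_apply, smul_apply, smul_eq_mul]
  ring

lemma complexLineDeriv_pow (hF : DifferentiableAt ℝ F x) (k : ℕ) :
    complexLineDeriv X (fun y => F y ^ k) x = k * F x ^ (k - 1) * complexLineDeriv X F x := by
  simp only [complexLineDeriv, fderiv_fun_pow k hF, smul_apply, smul_eq_mul, nsmul_eq_mul]
  ring

lemma complexLineDeriv_sum_const_mul {κ : Type*} {s : Finset κ} {u : κ → ℂ} {F : κ → E → ℂ}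
    (hF : ∀ c ∈ s, DifferentiableAt ℝ (F c) x) :
    complexLineDeriv X (fun y => ∑ c ∈ s, u c * F c y) x
      = ∑ c ∈ s, u c * complexLineDeriv X (F c) x := by
  have hderiv : HasFDerivAt (fun y => ∑ c ∈ s, u c * F c y) (∑ c ∈ s, u c • fderiv ℝ (F c) x) x :=
    HasFDerivAt.fun_sum fun c hc => (hF c hc).hasFDerivAt.const_mul (u c)
  simp only [complexLineDeriv, hderiv.fderiv, _root_.sum_apply, smul_apply, smul_eq_mul,
    Finset.mul_sum, ← Finset.sum_add_distrib]
  exact Finset.sum_congr rfl fun c _ => by ring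

lemma contDiff_complexLineDeriv {k : ℕ} (hF : ContDiff ℝ (k + 1) F) (X : E × E) :
    ContDiff ℝ k (complexLineDeriv X F) := by
  have hdir (v : E) : ContDiff ℝ k (fun y => fderiv ℝ F y v) :=
    (hF.fderiv_right le_rfl).clm_apply contDiff_const
  exact (hdir X.1).add (contDiff_const.mul (hdir X.2))

lemma tsupport_complexLineDeriv_subset (X : E × E) (F : E → ℂ) :
    tsupport (complexLineDeriv X F) ⊆ tsupport F := by
  refine (closure_mono fun y hy => ?_).trans (tsupport_fderiv_subset ℝ)
  contrapose! hy
  simp [complexLineDeriv, Function.notMem_support.mp hy]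

lemma integral_complexLineDeriv_eq_zero [FiniteDimensional ℝ E] [MeasurableSpace E] [BorelSpace E]
    (μ : Measure E) [μ.IsAddHaarMeasure] (hF : ContDiff ℝ 1 F) (hsupp : HasCompactSupport F)
    (X : E × E) : ∫ y, complexLineDeriv X F y ∂μ = 0 := by
  have hint (v : E) : Integrable (fun y => fderiv ℝ F y v) μ :=
    ((hF.continuous_fderiv one_ne_zero).clm_apply continuous_const).integrable_of_hasCompactSupport
      (hsupp.fderiv_apply (𝕜 := ℝ) v)
  have hzero (v : E) : ∫ y, fderiv ℝ F y v ∂μ = 0 := by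
    simpa using integral_mul_fderiv_eq_neg_fderiv_mul_of_integrable (μ := μ) (𝕜 := ℂ)
      (f := fun _ => (1 : ℂ)) (g := F) (v := v) (by simp) (by simpa using hint v)
      (by simpa using hF.continuous.integrable_of_hasCompactSupport hsupp)
      (fun _ _ => differentiableAt_const _) (fun y _ => hF.differentiable one_ne_zero y)
  simp only [complexLineDeriv]
  rw [integral_add (hint X.1) ((hint X.2).const_mul I), integral_const_mul, hzero, hzero, mul_zero,
    add_zero]

end ComplexLineDeriv

section Coordinates

variable {ι E : Type*} [Fintype ι] [DecidableEq ι] [NormedAddCommGroup E] [NormedSpace ℝ E]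

/-- The complexified tangent vector `X` of `E` placed in the `j`-th coordinate of `ι → E`, so that
`complexLineDeriv (coordVec j X)` is a derivative in the `j`-th variable. -/
def coordVec (j : ι) (X : E × E) : (ι → E) × (ι → E) :=
  (Pi.single j X.1, Pi.single j X.2)

lemma complexLineDeriv_comp_diagonal {G : (ι → E) → ℂ} {x : E}
    (hG : DifferentiableAt ℝ G (fun _ => x)) (X : E × E) :
    complexLineDeriv X (fun y => G fun _ => y) x
      = ∑ j, complexLineDeriv (coordVec j X) G (fun _ => x) := by
  have hdiag : HasFDerivAt (fun y (_ : ι) => y)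
      (ContinuousLinearMap.pi fun _ : ι => ContinuousLinearMap.id ℝ E) x :=
    hasFDerivAt_pi.mpr fun _ => hasFDerivAt_id x
  have hdir (v : E) : fderiv ℝ (fun y => G fun _ => y) x v
      = ∑ j, fderiv ℝ G (fun _ => x) (Pi.single j v) := by
    rw [← map_sum, Finset.univ_sum_single]
    exact congrArg (· v) (hG.hasFDerivAt.comp x hdiag).fderiv
  simp only [complexLineDeriv, coordVec, hdir, Finset.mul_sum, Finset.sum_add_distrib]

lemma complexLineDeriv_coordVec_prod {s : Finset ι} {j : ι} (hj : j ∈ s) {h : ι → E → ℂ}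
    {z : ι → E} (hh : ∀ k ∈ s, DifferentiableAt ℝ (h k) (z k)) (X : E × E) :
    complexLineDeriv (coordVec j X) (fun w => ∏ k ∈ s, h k (w k)) z
      = complexLineDeriv X (h j) (z j) * ∏ k ∈ s.erase j, h k (z k) := by
  have hcomp : ∀ k ∈ s, HasFDerivAt (fun w : ι → E => h k (w k))
      ((fderiv ℝ (h k) (z k)).comp (ContinuousLinearMap.proj k)) z := fun k hk =>
    (hh k hk).hasFDerivAt.comp z (hasFDerivAt_apply k z)
  have hdir (v : E) : fderiv ℝ (fun w => ∏ k ∈ s, h k (w k)) z (Pi.single j v)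
      = (∏ k ∈ s.erase j, h k (z k)) * fderiv ℝ (h j) (z j) v := by
    rw [(HasFDerivAt.finsetProd hcomp).fderiv, _root_.sum_apply, Finset.sum_eq_single_of_mem j hj]
    · simp
    · intro k _ hkj
      simp [Pi.single_eq_of_ne hkj]
  simp only [complexLineDeriv, coordVec, hdir]
  ring

lemma complexLineDeriv_coordVec_comp_eval_of_ne {i j : ι} (hij : i ≠ j) {φ : E → ℂ} {z : ι → E}
    (hφ : DifferentiableAt ℝ φ (z i)) (X : E × E) :
    complexLineDeriv (coordVec j X) (fun w => φ (w i)) z = 0 := by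
  have hcomp : HasFDerivAt (fun w : ι → E => φ (w i))
      ((fderiv ℝ φ (z i)).comp (ContinuousLinearMap.proj i)) z :=
    hφ.hasFDerivAt.comp z (hasFDerivAt_apply i z)
  have hdir (v : E) : fderiv ℝ (fun w : ι → E => φ (w i)) z (Pi.single j v) = 0 := by
    rw [hcomp.fderiv]
    simp [Pi.single_eq_of_ne hij]
  simp only [complexLineDeriv, coordVec, hdir, mul_zero, add_zero]

end Coordinates

section PowProd

variable {ι E : Type*} [Fintype ι]

/-- The monomial `∏ⱼ g(zⱼ) ^ aⱼ` in the values of `g` at the coordinates of `z`. -/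
def powProd (g : E → ℂ) (a : ι → ℕ) (z : ι → E) : ℂ :=
  ∏ j, g (z j) ^ a j

section Topology

variable [TopologicalSpace E] {g : E → ℂ} {a : ι → ℕ}

lemma mem_tsupport_of_const_mem_tsupport_powProd (ha : a ≠ 0) {x : E}
    (hx : (fun _ => x) ∈ tsupport (powProd g a)) : x ∈ tsupport g := by
  obtain ⟨j, hj⟩ := Function.ne_iff.mp ha
  have hsub : tsupport (powProd g a) ⊆ (fun z => z j) ⁻¹' tsupport g := by
    refine closure_minimal (fun z hz => subset_tsupport g fun hgz => hz ?_)
      ((isClosed_tsupport g).preimage (continuous_apply j))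
    exact Finset.prod_eq_zero (Finset.mem_univ j) (by rw [hgz, zero_pow hj])
  exact hsub hx

lemma hasCompactSupport_comp_diagonal {H : (ι → E) → ℂ} (hg : HasCompactSupport g) (ha : a ≠ 0)
    (hH : tsupport H ⊆ tsupport (powProd g a)) : HasCompactSupport fun x => H fun _ => x := by
  refine HasCompactSupport.intro' hg.isCompact (isClosed_tsupport g) fun x hx => ?_
  exact image_eq_zero_of_notMem_tsupport fun hxH =>
    hx (mem_tsupport_of_const_mem_tsupport_powProd ha (hH hxH))

end Topology

variable [NormedAddCommGroup E] [NormedSpace ℝ E] {g : E → ℂ} {a : ι → ℕ}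

lemma contDiff_powProd {k : ℕ} (hg : ContDiff ℝ k g) (a : ι → ℕ) : ContDiff ℝ k (powProd g a) :=
  contDiff_prod fun j _ => (hg.comp (contDiff_apply ℝ E j)).pow (a j)

variable [DecidableEq ι]

lemma complexLineDeriv_powProd (hg : Differentiable ℝ g) (a : ι → ℕ) (ρ : ι) (X : E × E) :
    complexLineDeriv (coordVec ρ X) (powProd g a)
      = fun z => (a ρ * g (z ρ) ^ (a ρ - 1) * complexLineDeriv X g (z ρ)) *
          ∏ k ∈ univ.erase ρ, g (z k) ^ a k := by
  funext z
  rw [← complexLineDeriv_pow (hg (z ρ)) (a ρ)]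
  exact complexLineDeriv_coordVec_prod (h := fun k y => g y ^ a k) (mem_univ ρ)
    (fun k _ => (hg.pow (a k)) (z k)) X

lemma complexLineDeriv_complexLineDeriv_powProd_of_ne (hg : ContDiff ℝ 2 g) (a : ι → ℕ) {ρ σ : ι}
    (hρσ : ρ ≠ σ) (X Y : E × E) (x : E) :
    complexLineDeriv (coordVec σ Y) (complexLineDeriv (coordVec ρ X) (powProd g a)) (fun _ => x)
      = a ρ * a σ *
          (complexLineDeriv Y g x * complexLineDeriv X g x * g x ^ (∑ j, a j - 2)) := by
  have hdg : Differentiable ℝ g := hg.differentiable two_ne_zero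
  have hdXg : Differentiable ℝ (complexLineDeriv X g) :=
    (contDiff_complexLineDeriv (k := 1) hg X).differentiable one_ne_zero
  have hσ : σ ∈ univ.erase ρ := Finset.mem_erase.mpr ⟨hρσ.symm, mem_univ σ⟩
  have hdφ : Differentiable ℝ fun y => a ρ * g y ^ (a ρ - 1) * complexLineDeriv X g y := by
    fun_prop
  have hsum : a ρ + (a σ + ∑ k ∈ (univ.erase ρ).erase σ, a k) = ∑ j, a j := by
    rw [Finset.add_sum_erase _ _ hσ, Finset.add_sum_erase _ _ (mem_univ ρ)]
  rw [complexLineDeriv_powProd hdg a ρ X,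
    complexLineDeriv_mul (by fun_prop) (by fun_prop),
    complexLineDeriv_coordVec_comp_eval_of_ne hρσ (z := fun _ => x) (hdφ x),
    complexLineDeriv_coordVec_prod (h := fun k y => g y ^ a k) hσ
      (fun k _ => (hdg.pow (a k)) x),
    complexLineDeriv_pow (hdg x), Finset.prod_pow_eq_pow_sum (s := (univ.erase ρ).erase σ)]
  rcases Nat.eq_zero_or_pos (a ρ) with hρ0 | hρ0
  · simp [hρ0]
  rcases Nat.eq_zero_or_pos (a σ) with hσ0 | hσ0
  · simp [hσ0]
  have hexp : ∑ j, a j - 2 = (a ρ - 1) + ((a σ - 1) + ∑ k ∈ (univ.erase ρ).erase σ, a k) := by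
    omega
  rw [hexp, pow_add, pow_add]
  ring

variable [MeasurableSpace E] [BorelSpace E] (μ : Measure E)

lemma integrable_complexLineDeriv_complexLineDeriv_powProd [IsFiniteMeasureOnCompacts μ]
    (hg : ContDiff ℝ 2 g) (hsupp : HasCompactSupport g) (ha : a ≠ 0) (ρ σ : ι) (X Y : E × E) :
    Integrable (fun x => complexLineDeriv (coordVec σ Y)
      (complexLineDeriv (coordVec ρ X) (powProd g a)) fun _ => x) μ := by
  have hcont : ContDiff ℝ 0 (complexLineDeriv (coordVec σ Y)
      (complexLineDeriv (coordVec ρ X) (powProd g a))) :=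
    contDiff_complexLineDeriv (k := 0)
      (contDiff_complexLineDeriv (k := 1) (contDiff_powProd hg a) _) _
  refine (hcont.continuous.comp (by fun_prop)).integrable_of_hasCompactSupport
    (hasCompactSupport_comp_diagonal hsupp ha ?_)
  exact (tsupport_complexLineDeriv_subset _ _).trans (tsupport_complexLineDeriv_subset _ _)

variable [FiniteDimensional ℝ E] [μ.IsAddHaarMeasure]

lemma sum_integral_complexLineDeriv_complexLineDeriv_powProd_eq_zero (hg : ContDiff ℝ 2 g)
    (hsupp : HasCompactSupport g) (ha : a ≠ 0) (ρ : ι) (X Y : E × E) :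
    ∑ σ, ∫ x, complexLineDeriv (coordVec σ Y)
      (complexLineDeriv (coordVec ρ X) (powProd g a)) (fun _ => x) ∂μ = 0 := by
  have hG : ContDiff ℝ 1 (complexLineDeriv (coordVec ρ X) (powProd g a)) :=
    contDiff_complexLineDeriv (k := 1) (contDiff_powProd hg a) _
  rw [← integral_finsetSum _ fun σ _ =>
    integrable_complexLineDeriv_complexLineDeriv_powProd μ hg hsupp ha ρ σ X Y]
  simp only [← complexLineDeriv_comp_diagonal (hG.differentiable one_ne_zero _)]
  exact integral_complexLineDeriv_eq_zero μ (hG.comp (by fun_prop))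
    (hasCompactSupport_comp_diagonal hsupp ha (tsupport_complexLineDeriv_subset _ _)) Y

lemma integral_complexLineDeriv_complexLineDeriv_powProd (hg : ContDiff ℝ 2 g)
    (hsupp : HasCompactSupport g) (ha : a ≠ 0) (ρ σ : ι) (X Y : E × E) :
    ∫ x, complexLineDeriv (coordVec σ Y)
        (complexLineDeriv (coordVec ρ X) (powProd g a)) (fun _ => x) ∂μ
      = a ρ * (a σ - if ρ = σ then (∑ j, a j : ℕ) else 0) *
          ∫ x, complexLineDeriv Y g x * complexLineDeriv X g x * g x ^ (∑ j, a j - 2) ∂μ := by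
  set J := ∫ x, complexLineDeriv Y g x * complexLineDeriv X g x * g x ^ (∑ j, a j - 2) ∂μ
  have hoff {τ : ι} (hτ : ρ ≠ τ) : ∫ x, complexLineDeriv (coordVec τ Y)
      (complexLineDeriv (coordVec ρ X) (powProd g a)) (fun _ => x) ∂μ = a ρ * a τ * J := by
    simp only [complexLineDeriv_complexLineDeriv_powProd_of_ne hg a hτ]
    exact integral_const_mul _ _
  by_cases hρσ : ρ = σ
  · subst hρσ
    have htotal := sum_integral_complexLineDeriv_complexLineDeriv_powProd_eq_zero μ hg hsupp ha
      ρ X Y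
    rw [← Finset.add_sum_erase _ _ (mem_univ ρ),
      Finset.sum_congr rfl fun τ hτ => hoff (Finset.ne_of_mem_erase hτ).symm,
      ← Finset.sum_mul, ← Finset.mul_sum] at htotal
    rw [if_pos rfl, ← Finset.add_sum_erase _ _ (mem_univ ρ)]
    push_cast
    linear_combination htotal
  · rw [if_neg hρσ, Nat.cast_zero, sub_zero, hoff hρσ]

lemma integral_complexLineDeriv_complexLineDeriv_sum_powProd {κ : Type*} {s : Finset κ} {m : ℕ}
    (hm : m ≠ 0) (u : κ → ℂ) {a : κ → ι → ℕ} (ha : ∀ c ∈ s, ∑ j, a c j = m) (hg : ContDiff ℝ 2 g)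
    (hsupp : HasCompactSupport g) (ρ σ : ι) (X Y : E × E) :
    ∫ x, complexLineDeriv (coordVec σ Y) (complexLineDeriv (coordVec ρ X)
        fun z => ∑ c ∈ s, u c * powProd g (a c) z) (fun _ => x) ∂μ
      = (∑ c ∈ s, u c * (a c ρ * (a c σ - if ρ = σ then (m : ℂ) else 0))) *
          ∫ x, complexLineDeriv Y g x * complexLineDeriv X g x * g x ^ (m - 2) ∂μ := by
  have ha0 : ∀ c ∈ s, a c ≠ 0 := fun c hc h0 => hm (by simp [← ha c hc, h0])
  have hP (c : κ) : ContDiff ℝ 2 (powProd g (a c)) := contDiff_powProd hg (a c)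
  have hinner : complexLineDeriv (coordVec ρ X) (fun z => ∑ c ∈ s, u c * powProd g (a c) z)
      = fun z => ∑ c ∈ s, u c * complexLineDeriv (coordVec ρ X) (powProd g (a c)) z :=
    funext fun z => complexLineDeriv_sum_const_mul
      fun c _ => (hP c).differentiable two_ne_zero z
  have houter (x : E) := complexLineDeriv_sum_const_mul (s := s) (u := u) (X := coordVec σ Y)
    (x := fun _ => x) fun c _ => (contDiff_complexLineDeriv (k := 1) (hP c)
      (coordVec ρ X)).differentiable one_ne_zero _
  simp only [hinner, houter]
  rw [integral_finsetSum _ fun c hc => (integrable_complexLineDeriv_complexLineDeriv_powProd μ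
    hg hsupp (ha0 c hc) ρ σ X Y).const_mul (u c), Finset.sum_mul]
  refine Finset.sum_congr rfl fun c hc => ?_
  rw [integral_const_mul, integral_complexLineDeriv_complexLineDeriv_powProd μ hg hsupp (ha0 c hc),
    ha c hc]
  split_ifs <;> simp only [Nat.cast_zero, mul_assoc]

end PowProd

section Wirtinger

/-- The complexified tangent vector `∂ = (∂_x - i ∂_y) / 2` of `ℂ`, with `∂_x` and `∂_y` encoded as
`1` and `I`. -/
def wirtingerVec : ℂ × ℂ := (2⁻¹ : ℝ) • (1, -I)

/-- The complexified tangent vector `∂̄ = (∂_x + i ∂_y) / 2` of `ℂ`, in the encoding of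
`wirtingerVec`. -/
def conjWirtingerVec : ℂ × ℂ := (2⁻¹ : ℝ) • (1, I)

variable {m : ℕ}

lemma wD1_eq_complexLineDeriv : wD1 = complexLineDeriv wirtingerVec := by
  funext g z
  simp only [wD1, complexLineDeriv, wirtingerVec, Prod.smul_mk, map_smul, map_neg]
  simp only [real_smul]
  push_cast
  ring

lemma wDbar1_eq_complexLineDeriv : wDbar1 = complexLineDeriv conjWirtingerVec := by
  funext g z
  simp only [wDbar1, complexLineDeriv, conjWirtingerVec, Prod.smul_mk, map_smul]
  simp only [real_smul]
  push_cast
  ring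

lemma wD_eq_complexLineDeriv (j : Fin m) : wD j = complexLineDeriv (coordVec j wirtingerVec) := by
  funext F w
  simp only [wD, complexLineDeriv, coordVec, wirtingerVec, Prod.smul_mk, Pi.single_smul',
    Pi.single_neg, map_smul, map_neg]
  simp only [real_smul]
  push_cast
  ring

lemma wDbar_eq_complexLineDeriv (j : Fin m) :
    wDbar j = complexLineDeriv (coordVec j conjWirtingerVec) := by
  funext F w
  simp only [wDbar, complexLineDeriv, coordVec, conjWirtingerVec, Prod.smul_mk, Pi.single_smul',
    map_smul]
  simp only [real_smul]
  push_cast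
  ring

instance isAddHaarMeasure_dA : dA.IsAddHaarMeasure :=
  Measure.IsAddHaarMeasure.smul volume (by simp) (by simp [Real.pi_pos])

end Wirtinger

lemma sum_fin_Icc_one_eq_sum_Icc_two {M : Type*} [AddCommMonoid M] {n : ℕ} (hn : 1 ≤ n)
    (ψ : ℕ → ℕ → M) :
    ∑ σ : Fin (n + 1), ∑ ρ ∈ Icc 1 σ, ψ ((ρ : ℕ) + 1) ((σ : ℕ) + 1)
      = ∑ r ∈ Icc 2 (n + 1), ∑ s ∈ Icc r (n + 1), ψ r s := by
  have hone : ((1 : Fin (n + 1)) : ℕ) = 1 := by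
    rw [Fin.val_one', Nat.mod_eq_of_lt (by omega)]
  have hmap (σ : Fin (n + 1)) : (Icc 1 σ).map Fin.valEmbedding = Icc 1 (σ : ℕ) := by
    rw [Fin.map_valEmbedding_Icc, hone]
  have hinner (σ : Fin (n + 1)) :
      ∑ ρ ∈ Icc 1 σ, ψ ((ρ : ℕ) + 1) ((σ : ℕ) + 1) =
        ∑ r ∈ Ico 2 ((σ : ℕ) + 1 + 1), ψ r (σ + 1) := by
    rw [← Finset.sum_Ico_add' (fun r => ψ r ((σ : ℕ) + 1)) 1 (σ + 1) 1,
      Finset.Ico_add_one_right_eq_Icc, ← hmap, Finset.sum_map]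
    rfl
  calc ∑ σ : Fin (n + 1), ∑ ρ ∈ Icc 1 σ, ψ ((ρ : ℕ) + 1) ((σ : ℕ) + 1)
      = ∑ s ∈ Finset.range (n + 1), ∑ r ∈ Ico 2 (s + 1 + 1), ψ r (s + 1) := by
        simp only [hinner]
        exact Fin.sum_univ_eq_sum_range (fun s => ∑ r ∈ Ico 2 (s + 1 + 1), ψ r (s + 1)) (n + 1)
    _ = ∑ s ∈ Ico 2 (n + 2), ∑ r ∈ Ico 2 (s + 1), ψ r s := by
        rw [Finset.range_eq_Ico,
          Finset.sum_Ico_add' (fun s => ∑ r ∈ Ico 2 (s + 1), ψ r s) 0 (n + 1) 1,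
          Finset.sum_eq_sum_Ico_succ_bot (by omega)]
        simp
    _ = ∑ r ∈ Icc 2 (n + 1), ∑ s ∈ Icc r (n + 1), ψ r s := by
        rw [← Finset.sum_Ico_Ico_comm]
        rfl

section Composition

variable {m : ℕ} (c : Composition m)

/-- The parts of a composition of `m`, padded by zeros to an `m`-tuple of exponents. -/
def paddedParts (j : Fin m) : ℕ := c.blocks.getD j 0

lemma paddedParts_castLE (j : Fin c.length) :
    paddedParts c (Fin.castLE c.length_le j) = c.blocksFun j := by
  simp [paddedParts, Composition.blocksFun]

lemma paddedParts_eq_zero {i : Fin m} (hi : c.length ≤ i) : paddedParts c i = 0 :=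
  List.getD_eq_default _ _ hi

@[to_additive]
lemma prod_apply_paddedParts {M : Type*} [CommMonoid M] {φ : Fin m → ℕ → M} (hφ : ∀ i, φ i 0 = 1) :
    ∏ i, φ i (paddedParts c i) = ∏ j, φ (Fin.castLE c.length_le j) (c.blocksFun j) := by
  refine (Finset.prod_of_injOn (Fin.castLE c.length_le) (Fin.castLE_injective _).injOn
    (fun _ _ => Finset.mem_coe.mpr (mem_univ _)) (fun i _ hi => ?_) fun j _ => ?_).symm
  · have hlen : c.length ≤ i := not_lt.mp fun hlt =>
      hi ⟨⟨i, hlt⟩, Finset.mem_coe.mpr (mem_univ _), rfl⟩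
    rw [paddedParts_eq_zero c hlen, hφ]
  · rw [paddedParts_castLE]

lemma sum_paddedParts : ∑ j, paddedParts c j = m :=
  (sum_apply_paddedParts c (φ := fun _ k => k) fun _ => rfl).trans c.sum_blocksFun

lemma Upsilon0Fun_eq_sum_powProd (f : ℂ → ℝ) :
    (Upsilon0Fun f : (Fin m → ℂ) → ℂ)
      = fun z => ∑ c, Upsilon0 c * powProd (fun w => (f w : ℂ)) (paddedParts c) z := by
  funext z
  refine Finset.sum_congr rfl fun c _ => congrArg (Upsilon0 c * ·) ?_
  exact (prod_apply_paddedParts c (φ := fun i k => (f (z i) : ℂ) ^ k) fun _ => pow_zero _).symm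

/-- The coefficient `k_r (k_s - δ_{rs} m)` of the integral of `∂_s ∂̄_r` of the monomial of a
composition `k` of `m`; indices are 1-based, as in `compPart`. -/
def pairCoeff (r s : ℕ) : ℂ :=
  compPart c r * (compPart c s - if r = s then (m : ℂ) else 0)

lemma compPart_val_add_one (j : Fin m) : compPart c (j + 1) = paddedParts c j := rfl

lemma compPart_eq_zero {r : ℕ} (hr : c.length < r) : compPart c r = 0 := by
  rw [compPart, List.getD_eq_default _ _ (Nat.le_sub_one_of_lt hr), Nat.cast_zero]

lemma pairCoeff_eq_zero {r s : ℕ} (hrs : r ≤ s) (hs : c.length < s) : pairCoeff c r s = 0 := by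
  rcases hrs.eq_or_lt with rfl | hlt
  · rw [pairCoeff, compPart_eq_zero c hs, zero_mul]
  · rw [pairCoeff, if_neg hlt.ne, compPart_eq_zero c hs, sub_zero, mul_zero]

lemma sum_Icc_pairCoeff_eq_sum_Icc_length :
    ∑ r ∈ Icc 2 m, ∑ s ∈ Icc r m, pairCoeff c r s
      = ∑ r ∈ Icc 2 c.length, ∑ s ∈ Icc r c.length, pairCoeff c r s := by
  have hzero {r s : ℕ} (hs : s ∈ Icc r m) (hs' : s ∉ Icc r c.length) : pairCoeff c r s = 0 := by
    simp only [Finset.mem_Icc] at hs hs'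
    exact pairCoeff_eq_zero c hs.1 (by omega)
  have hinner (r : ℕ) : ∑ s ∈ Icc r c.length, pairCoeff c r s = ∑ s ∈ Icc r m, pairCoeff c r s :=
    Finset.sum_subset (Finset.Icc_subset_Icc_right c.length_le) fun _ => hzero
  simp only [← hinner]
  refine (Finset.sum_subset (Finset.Icc_subset_Icc_right c.length_le) fun r hr hr' => ?_).symm
  simp only [Finset.mem_Icc] at hr hr'
  rw [Finset.Icc_eq_empty (by omega), Finset.sum_empty]

lemma Yval_eq_neg_sum_pairCoeff (m : ℕ) :
    Yval m = -∑ c : Composition m, Upsilon0 c * ∑ r ∈ Icc 2 m, ∑ s ∈ Icc r m, pairCoeff c r s := by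
  refine congrArg Neg.neg (Finset.sum_congr rfl fun c _ => congrArg (Upsilon0 c * ·) ?_)
  rw [sum_Icc_pairCoeff_eq_sum_Icc_length, add_comm, ← Finset.sum_add_distrib]
  refine Finset.sum_congr rfl fun r hr => ?_
  rw [← Finset.add_sum_Ioc_eq_sum_Icc (Finset.mem_Icc.mp hr).2, ← Finset.Icc_add_one_left_eq_Ioc,
    pairCoeff, if_pos rfl]
  refine congrArg (_ + ·) (Finset.sum_congr rfl fun s hs => ?_)
  rw [pairCoeff, if_neg (Nat.lt_of_succ_le (Finset.mem_Icc.mp hs).1).ne, sub_zero]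

end Composition

lemma integral_wD_wDbar_Upsilon0Fun {f : ℂ → ℝ} (hf : ContDiff ℝ 2 f) (hsupp : HasCompactSupport f)
    {m : ℕ} (ρ σ : Fin m) :
    ∫ lam : ℂ, wD σ (wDbar ρ (Upsilon0Fun f)) (fun _ => lam) ∂dA
      = (∑ c : Composition m, Upsilon0 c * pairCoeff c (ρ + 1) (σ + 1)) *
          ∫ lam : ℂ, wD1 (fun w => (f w : ℂ)) lam * wDbar1 (fun w => (f w : ℂ)) lam *
            (f lam : ℂ) ^ (m - 2) ∂dA := by
  have hg : ContDiff ℝ 2 fun w => (f w : ℂ) := ofRealCLM.contDiff.comp hf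
  have hgsupp : HasCompactSupport fun w => (f w : ℂ) := hsupp.comp_left ofReal_zero
  rw [Upsilon0Fun_eq_sum_powProd, wD_eq_complexLineDeriv, wDbar_eq_complexLineDeriv,
    wD1_eq_complexLineDeriv, wDbar1_eq_complexLineDeriv,
    integral_complexLineDeriv_complexLineDeriv_sum_powProd dA (Fin.pos ρ).ne' _
      (fun c _ => sum_paddedParts c) hg hgsupp]
  simp only [pairCoeff, compPart_val_add_one, add_left_inj, Fin.val_inj]

theorem upsilon_diagonal_derivative_sum_general
    (f : ℂ → ℝ) (hf : ContDiff ℝ 2 f) (hsupp : HasCompactSupport f)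
    (n : ℕ) (hn : 1 ≤ n) :
    (∑ σ : Fin (n + 1), ∑ ρ ∈ Finset.Icc 1 σ,
        ∫ lam : ℂ, wD σ (wDbar ρ (Upsilon0Fun f)) (fun _ => lam) ∂dA)
      = -Yval (n + 1) *
          ∫ lam : ℂ, wD1 (fun w => (f w : ℂ)) lam * wDbar1 (fun w => (f w : ℂ)) lam *
            (f lam : ℂ) ^ (n - 1) ∂dA := by
  simp only [integral_wD_wDbar_Upsilon0Fun hf hsupp, ← Finset.sum_mul]
  rw [sum_fin_Icc_one_eq_sum_Icc_two hn
    fun r s => ∑ c : Composition (n + 1), Upsilon0 c * pairCoeff c r s,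
    Yval_eq_neg_sum_pairCoeff, neg_neg]
  simp only [Finset.mul_sum, Finset.sum_comm (s := univ (α := Composition (n + 1))),
    Nat.reduceSubDiff]

/-- `Σ_{2 ≤ r ≤ s ≤ n+1} ∫_ℂ (∂_s ∂̄_r Υ₀^{n+1}[f])(λ, …, λ) dA(λ)
  = −𝒴_{n+1} ∫_ℂ ∂f(λ) ∂̄f(λ) f(λ)^{n−1} dA(λ)`.
The 1-based coordinates `r, s ∈ {2, …, n+1}` correspond to the 0-based coordinates
`ρ, σ ∈ {1, …, n}` of `Fin (n+1)` (with `ρ = r − 1 ≤ σ = s − 1`). -/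
theorem upsilon_diagonal_derivative_sum
    (f : ℂ → ℝ) (hf : ContDiff ℝ 3 f) (hsupp : HasCompactSupport f)
    (n : ℕ) (hn : 1 ≤ n) :
    (∑ σ : Fin (n + 1), ∑ ρ ∈ Finset.Icc 1 σ,
        ∫ lam : ℂ, wD σ (wDbar ρ (Upsilon0Fun f)) (fun _ => lam) ∂dA)
      = -Yval (n + 1) *
          ∫ lam : ℂ, wD1 (fun w => (f w : ℂ)) lam * wDbar1 (fun w => (f w : ℂ)) lam *
            (f lam : ℂ) ^ (n - 1) ∂dA :=
  upsilon_diagonal_derivative_sum_general f (hf.of_le (by norm_num)) hsupp n hn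
end
end
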